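/- arXiv:1309.0422 — 14 statements merged into one kernel-verified Lean document; each statement's English description precedes it below -/
import Mathlib

section
/- Let L be a set of words over the alphabet Σ₃ = {0,1,2} such that every word of L lies in φ(Σ₂*), and let S be a common supersequence of L. Then there exists a word S' over Σ₃ with length |S'| ≤ |S| such that S' is a common supersequence of L and S' ∈ φ(Σ₂*), i.e. S' = φ(w') for some word w' over Σ₂ = {0,1}. -/
/-- The morphism φ : Σ₂* → Σ₃* with φ(0) = 0202 and φ(1) = 1. -/
def phi : List (Fin 2) → List (Fin 3)
  | [] => []
  | a :: w => (if a = 0 then [0, 2, 0, 2] else [1]) ++ phi w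

/-- The letter at position `s` of `0202…`. -/
def awaited (s : ℕ) : Fin 3 := if s % 2 = 0 then 0 else 2

/-- Scan a ternary word, keeping each `1` and emitting a `0` each time the automaton that waits
cyclically for the letters `0, 2, 0, 2` completes a round; `s < 4` is the number of letters of the
current round already seen. -/
def compress : ℕ → List (Fin 3) → List (Fin 2)
  | _, [] => []
  | s, c :: S =>
    if c = 1 then 1 :: compress s S
    else if c = awaited s then
      if s = 3 then 0 :: compress 0 S else compress (s + 1) S
    else compress s S

theorem length_phi_compress_le (S : List (Fin 3)) :
    ∀ s ≤ 3, (phi (compress s S)).length ≤ S.length + s := by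
  induction S with
  | nil => simp [compress, phi]
  | cons c S ih =>
    intro s hs
    have h0 := ih 0 (by omega)
    have h := ih s hs
    simp only [compress]
    split_ifs with h1 h2 h3
    · simp [phi]; omega
    · simp [phi]; omega
    · have := ih (s + 1) (by omega)
      simp only [List.length_cons]; omega
    · simp only [List.length_cons]; omega

/-- The second conjunct treats a block `0202` of which `k` letters are matched before `S` starts;
the automaton is then at least as far in its round. -/
theorem sublist_compress_aux (S : List (Fin 3)) :
    (∀ s ≤ 3, ∀ u, (phi u).Sublist S → u.Sublist (compress s S)) ∧
    (∀ s ≤ 3, ∀ k ≤ s, ∀ u, (([0, 2, 0, 2] : List (Fin 3)).drop k ++ phi u).Sublist S →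
      (0 :: u).Sublist (compress s S)) := by
  induction S with
  | nil =>
    refine ⟨fun s _ u h => ?_, fun s hs k hk u h => ?_⟩
    · rcases u with _ | ⟨a, u⟩
      · simp
      · fin_cases a <;> simp [phi] at h
    · have := h.length_le
      simp at this
      omega
  | cons c S ih =>
    obtain ⟨ihA, ihB⟩ := ih
    have partialBlock : ∀ s ≤ 3, ∀ k ≤ s, ∀ u,
        (([0, 2, 0, 2] : List (Fin 3)).drop k ++ phi u).Sublist (c :: S) →
        (0 :: u).Sublist (compress s (c :: S)) := by
      intro s hs k hk u h
      have hu : (phi u).Sublist S := by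
        have hk3 : k ≤ 3 := hk.trans hs
        have h' : ((([0, 2, 0, 2] : List (Fin 3)).drop k ++ phi u).tail).Sublist S := h.tail
        refine List.Sublist.trans ?_ h'
        interval_cases k
        exacts [List.sublist_append_right [2, 0, 2] _, List.sublist_append_right [0, 2] _,
          List.sublist_append_right [2] _, List.Sublist.refl _]
      have hA := ihA 0 (by omega) u hu
      rcases List.sublist_cons_iff.1 h with h | ⟨r, hr, h⟩
      · simp only [compress]
        split_ifs with h1 h2 h3
        · exact (ihB s hs k hk u h).cons _
        · exact hA.cons_cons _
        · exact ihB (s + 1) (by omega) k (by omega) u h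
        · exact ihB s hs k hk u h
      · have hB := fun s hs hk => ihB s hs (k + 1) hk u
        have hk3 : k ≤ 3 := hk.trans hs
        interval_cases s <;> interval_cases k <;> simp at hr <;> obtain ⟨rfl, rfl⟩ := hr <;>
          simp [compress, awaited] <;> first | exact hA | exact hB _ (by omega) (by omega) (by simpa using h)
    refine ⟨fun s hs u h => ?_, partialBlock⟩
    rcases u with _ | ⟨a, u⟩
    · simp
    · fin_cases a
      · exact partialBlock s hs 0 (by omega) u (by simpa [phi] using h)
      · rcases List.sublist_cons_iff.1 h with h | ⟨r, hr, h⟩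
        · simp only [compress]
          split_ifs with h1 h2 h3
          · exact (ihA s hs _ h).cons _
          · exact (ihA 0 (by omega) _ h).cons _
          · exact ihA (s + 1) (by omega) _ h
          · exact ihA s hs _ h
        · simp [phi] at hr
          obtain ⟨rfl, rfl⟩ := hr
          simpa [compress] using ihA s hs u h

theorem phi_sublist_phi {u v : List (Fin 2)} (h : u.Sublist v) : (phi u).Sublist (phi v) := by
  induction h with
  | slnil => simp
  | cons a _ ih => exact ih.trans (List.sublist_append_right _ _)
  | cons_cons a _ ih => exact (List.Sublist.refl _).append ih

theorem stmt_0 (L : Set (List (Fin 3))) (S : List (Fin 3))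
    (hL : ∀ w ∈ L, ∃ u : List (Fin 2), w = phi u)
    (hS : ∀ w ∈ L, w.Sublist S) :
    ∃ w' : List (Fin 2), (∀ w ∈ L, w.Sublist (phi w')) ∧ (phi w').length ≤ S.length := by
  refine ⟨compress 0 S, fun w hw => ?_, length_phi_compress_le S 0 (by omega)⟩
  obtain ⟨u, rfl⟩ := hL w hw
  exact phi_sublist_phi ((sublist_compress_aux S).1 0 (by omega) u (hS _ hw))
end

section
/- Let L be a set of words over an alphabet A, let a ∈ A, and assume no word of L contains two consecutive occurrences of a (i.e., the factor aa). If a word of the form x ++ [a,a] ++ y is a common supersequence of L, then x ++ [a] ++ y is also a common supersequence of L. -/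
theorem stmt_3 {A : Type*} (L : Set (List A)) (a : A) (x y : List A)
    (hL : ∀ w ∈ L, ¬ ([a, a] <:+: w))
    (hS : ∀ w ∈ L, w.Sublist (x ++ [a, a] ++ y)) :
    ∀ w ∈ L, w.Sublist (x ++ [a] ++ y) := by
  intro w hw
  obtain ⟨u, v, rfl, hu, hv⟩ := List.sublist_append_iff.mp (hS w hw)
  obtain ⟨s, t, rfl, hs, ht⟩ := List.sublist_append_iff.mp hu
  refine (hs.append ?_).append hv
  obtain ⟨n, hn, rfl⟩ := List.sublist_replicate_iff.mp (show t.Sublist (List.replicate 2 a) from ht)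
  refine (List.replicate_sublist_replicate (n := 1) a).mpr ?_
  by_contra hlt
  obtain rfl : n = 2 := by omega
  exact hL _ hw ⟨s, v, rfl⟩
end

section
/- Let L be a set of words over an alphabet A, let a, b ∈ A, and assume no word of L contains the factor ab (an occurrence of a immediately followed by b). If a word of the form x ++ [a,b] ++ y is a common supersequence of L, then the word x ++ [b,a] ++ y (obtained by swapping the two adjacent letters) is also a common supersequence of L. -/
theorem stmt_4 {A : Type*} (L : Set (List A)) (a b : A) (x y : List A)
    (hL : ∀ w ∈ L, ¬ ([a, b] <:+: w))
    (hS : ∀ w ∈ L, w.Sublist (x ++ [a, b] ++ y)) :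
    ∀ w ∈ L, w.Sublist (x ++ [b, a] ++ y) := by
  intro w hw
  have hab := hL w hw
  obtain ⟨_, v, rfl, h, hv⟩ := List.sublist_append_iff.mp (hS w hw)
  obtain ⟨u, m, rfl, hu, hm⟩ := List.sublist_append_iff.mp h
  refine (hu.append ?_).append hv
  have hm' : m = [] ∨ m = [a] ∨ m = [b] ∨ m = [a, b] := by
    simpa [List.sublists, or_assoc] using List.mem_sublists.mpr hm
  rcases hm' with rfl | rfl | rfl | rfl
  · simp
  · simp
  · simp
  · exact absurd ⟨u, v, rfl⟩ hab
end

section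
/- Let L be a set of words over Σ₃ = {0,1,2} such that every word of L lies in φ(Σ₂*), and let S be a common supersequence of L. Then there exists a word u over Σ₂ = {0,1} such that ψ(u) is a common supersequence of L and |ψ(u)| ≤ |S|, where ψ : Σ₂* → Σ₃* is the word morphism with ψ(0) = 02 and ψ(1) = 1. (That is, L always has a common supersequence, no longer than S, consisting only of blocks 02 and letters 1.) -/
/-- The morphism ψ : Σ₂* → Σ₃* with ψ(0) = 02 and ψ(1) = 1. -/
def psi : List (Fin 2) → List (Fin 3)
  | [] => []
  | a :: w => (if a = 0 then [0, 2] else [1]) ++ psi w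

/-- Keep the letters `a` (rewritten to `0`) and `1`, and delete all the other letters. -/
def contract (a : Fin 3) : List (Fin 3) → List (Fin 2) :=
  List.filterMap fun x => if x = a then some 0 else if x = 1 then some 1 else none

theorem psi_eq_flatMap (u : List (Fin 2)) :
    psi u = u.flatMap fun a => if a = 0 then [0, 2] else [1] := by
  induction u with
  | nil => rfl
  | cons a u ih => rw [psi, ih, List.flatMap_cons]

theorem psi_sublist_psi {u v : List (Fin 2)} (h : u.Sublist v) : (psi u).Sublist (psi v) := by
  simpa only [psi_eq_flatMap] using h.flatMap _

theorem psi_contract_phi {a : Fin 3} (ha : a = 0 ∨ a = 2) (v : List (Fin 2)) :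
    psi (contract a (phi v)) = phi v := by
  induction v with
  | nil => rfl
  | cons b v ih =>
    unfold contract at ih ⊢
    rcases ha with rfl | rfl <;> fin_cases b <;> simp [phi, psi, ih]

theorem length_psi_contract {a : Fin 3} (ha : a ≠ 1) (S : List (Fin 3)) :
    (psi (contract a S)).length = 2 * S.count a + S.count 1 := by
  induction S with
  | nil => rfl
  | cons x S ih =>
    unfold contract at ih ⊢
    fin_cases a <;> fin_cases x <;> simp_all [psi] <;> omega

theorem length_eq_sum_count (S : List (Fin 3)) :
    S.length = S.count 0 + S.count 1 + S.count 2 := by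
  induction S with
  | nil => rfl
  | cons x S ih => fin_cases x <;> simp [ih] <;> omega

theorem stmt_5 (L : Set (List (Fin 3))) (S : List (Fin 3))
    (hL : ∀ w ∈ L, ∃ u : List (Fin 2), w = phi u)
    (hS : ∀ w ∈ L, w.Sublist S) :
    ∃ u : List (Fin 2), (∀ w ∈ L, w.Sublist (psi u)) ∧ (psi u).length ≤ S.length := by
  have key : ∀ a : Fin 3, a = 0 ∨ a = 2 → ∀ w ∈ L, w.Sublist (psi (contract a S)) := by
    intro a ha w hw
    obtain ⟨v, rfl⟩ := hL w hw
    rw [← psi_contract_phi ha v]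
    exact psi_sublist_psi ((hS _ hw).filterMap _)
  have hlen := length_eq_sum_count S
  rcases le_total (S.count 0) (S.count 2) with h | h
  · refine ⟨contract 0 S, key 0 (Or.inl rfl), ?_⟩
    rw [length_psi_contract (by decide)]
    omega
  · refine ⟨contract 2 S, key 2 (Or.inr rfl), ?_⟩
    rw [length_psi_contract (by decide)]
    omega
end

section
/- Let n be a positive even integer and let L_n = {S_0, …, S_{n²}} with S_i = (0202)^i 1 (0202)^{n²−i} over Σ₃ = {0,1,2}. Let w be a word over Σ₂ = {0,1} such that S = φ(w) is a common supersequence of L_n, and suppose w contains exactly k occurrences of 1 (necessarily k ≥ 1). Then w contains at least ⌈(n²+1)/k⌉ − 1 + n² occurrences of 0; equivalently, S contains at least ⌈(n²+1)/k⌉ − 1 + n² blocks 0202. -/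
/-- `(0202)^k` over Σ₃. -/
def pow0202 (k : ℕ) : List (Fin 3) := (List.replicate k [(0 : Fin 3), 2, 0, 2]).flatten

/-- `S_i = (0202)^i 1 (0202)^{n²-i}`. -/
def Sword (n i : ℕ) : List (Fin 3) := pow0202 i ++ [1] ++ pow0202 (n ^ 2 - i)

theorem count_two_phi (w : List (Fin 2)) : (phi w).count 2 = 2 * w.count 0 := by
  induction w with
  | nil => rfl
  | cons a w ih =>
    fin_cases a <;> simp [phi, ih]
    omega

theorem count_two_pow0202 (k : ℕ) : (pow0202 k).count 2 = 2 * k := by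
  simp [pow0202, List.count_flatten, mul_comm]

/-- An occurrence of `1` in `phi w` comes from an occurrence of `1` in `w`. -/
theorem exists_of_phi_eq_append_one_cons {w : List (Fin 2)} {r s : List (Fin 3)}
    (h : phi w = r ++ 1 :: s) : ∃ u v, w = u ++ 1 :: v ∧ phi u = r ∧ phi v = s := by
  induction w generalizing r with
  | nil => simp [phi] at h
  | cons a w ih =>
    obtain rfl | rfl : a = 0 ∨ a = 1 := by omega
    · rcases r with _ | ⟨_, _ | ⟨_, _ | ⟨_, _ | ⟨_, r⟩⟩⟩⟩ <;> simp [phi] at h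
      obtain ⟨rfl, rfl, rfl, rfl, h⟩ := h
      obtain ⟨u, v, rfl, rfl, rfl⟩ := ih h
      exact ⟨0 :: u, v, by simp, by simp [phi], rfl⟩
    · rcases r with _ | ⟨_, r⟩ <;> simp [phi] at h
      · exact ⟨[], w, by simp, rfl, h⟩
      · obtain ⟨rfl, h⟩ := h
        obtain ⟨u, v, rfl, rfl, rfl⟩ := ih h
        exact ⟨1 :: u, v, by simp, by simp [phi], rfl⟩

theorem exists_of_pow0202_sublist_phi {w : List (Fin 2)} {i j : ℕ}
    (h : (pow0202 i ++ [1] ++ pow0202 j).Sublist (phi w)) :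
    ∃ u v, w = u ++ 1 :: v ∧ i ≤ u.count 0 ∧ j ≤ v.count 0 := by
  rw [List.append_assoc, List.append_sublist_iff] at h
  obtain ⟨r₁, r₂, hr, h₁, h₂⟩ := h
  rw [List.singleton_append, List.cons_sublist_iff] at h₂
  obtain ⟨t₁, t₂, rfl, hmem, h₂⟩ := h₂
  obtain ⟨x, y, rfl⟩ := List.append_of_mem hmem
  obtain ⟨u, v, hw, hu, hv⟩ := exists_of_phi_eq_append_one_cons
    (w := w) (r := r₁ ++ x) (s := y ++ t₂) (by simp [hr])
  have hi := (h₁.trans (List.sublist_append_left r₁ x)).count_le 2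
  have hj := (h₂.trans (List.sublist_append_right y t₂)).count_le 2
  rw [← hu, count_two_phi, count_two_pow0202] at hi
  rw [← hv, count_two_phi, count_two_pow0202] at hj
  exact ⟨u, v, hw, by omega, by omega⟩

/-- Each occurrence of `1` in `w` accounts for at most `d + 1` values of `i`, namely those within
distance `d` below (`c` plus) the number of `0`s preceding it. -/
theorem exists_finset_card_le_count_one_mul (w : List (Fin 2)) (c d : ℕ) :
    ∃ A : Finset ℕ, A.card ≤ w.count 1 * (d + 1) ∧
      ∀ i u v, w = u ++ 1 :: v → i ≤ c + u.count 0 → c + u.count 0 ≤ i + d → i ∈ A := by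
  induction w generalizing c with
  | nil => exact ⟨∅, by simp, by simp⟩
  | cons a w ih =>
    obtain rfl | rfl : a = 0 ∨ a = 1 := by omega
    · obtain ⟨A, hA, h⟩ := ih (c + 1)
      refine ⟨A, by simpa using hA, fun i u v hw h₁ h₂ => ?_⟩
      rcases u with _ | ⟨b, u⟩ <;> simp at hw
      obtain ⟨rfl, rfl⟩ := hw
      simp only [List.count_cons_self] at h₁ h₂
      exact h i u v rfl (by omega) (by omega)
    · obtain ⟨A, hA, h⟩ := ih c
      refine ⟨A ∪ Finset.Icc (c - d) c, ?_, fun i u v hw h₁ h₂ => ?_⟩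
      · have hcard := Finset.card_union_le A (Finset.Icc (c - d) c)
        rw [Nat.card_Icc] at hcard
        rw [List.count_cons_self, add_mul]
        omega
      · rw [Finset.mem_union, Finset.mem_Icc]
        rcases u with _ | ⟨b, u⟩ <;> simp at hw
        · simp only [List.count_nil] at h₁ h₂
          omega
        · obtain ⟨rfl, rfl⟩ := hw
          simp at h₁ h₂
          exact Or.inl (h i u v rfl h₁ h₂)

theorem stmt_6 (n : ℕ) (hn : 0 < n) (hne : Even n) (w : List (Fin 2)) (k : ℕ)
    (hsup : ∀ i ≤ n ^ 2, (Sword n i).Sublist (phi w))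
    (hk : w.count 1 = k) (hk1 : 1 ≤ k) :
    ⌈((n : ℚ) ^ 2 + 1) / (k : ℚ)⌉ - 1 + (n : ℤ) ^ 2 ≤ (w.count 0 : ℤ) := by
  have hocc : ∀ i ≤ n ^ 2, ∃ u v, w = u ++ 1 :: v ∧ i ≤ u.count 0 ∧ n ^ 2 - i ≤ v.count 0 :=
    fun i hi => exists_of_pow0202_sublist_phi (hsup i hi)
  have hcount : ∀ u v : List (Fin 2), w = u ++ 1 :: v → w.count 0 = u.count 0 + v.count 0 := by
    rintro u v rfl
    simp
  have hm : n ^ 2 ≤ w.count 0 := by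
    obtain ⟨u, v, hw, h₁, -⟩ := hocc (n ^ 2) le_rfl
    have := hcount u v hw
    omega
  obtain ⟨d, hd⟩ := Nat.exists_eq_add_of_le hm
  obtain ⟨A, hA, hmem⟩ := exists_finset_card_le_count_one_mul w 0 d
  have hsub : Finset.range (n ^ 2 + 1) ⊆ A := by
    intro i hi
    rw [Finset.mem_range] at hi
    obtain ⟨u, v, hw, h₁, h₂⟩ := hocc i (by omega)
    have := hcount u v hw
    exact hmem i u v hw (by omega) (by omega)
  have hcard : n ^ 2 + 1 ≤ k * (d + 1) := by
    simpa [hk] using (Finset.card_le_card hsub).trans hA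
  have hceil : ⌈((n : ℚ) ^ 2 + 1) / (k : ℚ)⌉ ≤ (d : ℤ) + 1 := by
    rw [Int.ceil_le, div_le_iff₀ (by exact_mod_cast hk1), mul_comm]
    exact_mod_cast hcard
  rw [hd]
  push_cast
  linarith
end

section
/- Let n be a positive even integer and let L_n = {S_0, …, S_{n²}} with S_i = (0202)^i 1 (0202)^{n²−i} over Σ₃ = {0,1,2}. Let w be a word over Σ₂ = {0,1} such that S = φ(w) is a common supersequence of L_n, and suppose w contains exactly n² − 1 + k occurrences of 0, where k ≥ 1. Then w contains at least ⌈(n²+1)/k⌉ occurrences of 1; equivalently, S contains at least ⌈(n²+1)/k⌉ occurrences of the letter 1. -/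
theorem count_zero_phi (w : List (Fin 2)) : (phi w).count 0 = 2 * w.count 0 := by
  induction w with
  | nil => simp [phi]
  | cons a w ih =>
    fin_cases a <;> simp [phi, ih]
    omega

theorem count_zero_pow0202 (m : ℕ) : (pow0202 m).count 0 = 2 * m := by
  simp [pow0202, List.count_flatten, Nat.mul_comm]

/-- Every letter `1` of `phi w` is the image of a letter `1` of `w`. -/
theorem exists_split_of_phi_eq_append_one (w : List (Fin 2)) (A B : List (Fin 3))
    (h : phi w = A ++ 1 :: B) :
    ∃ u v, w = u ++ 1 :: v ∧ A = phi u ∧ B = phi v := by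
  induction w generalizing A with
  | nil => simp [phi] at h
  | cons a w ih =>
    obtain rfl | rfl : a = 0 ∨ a = 1 := by fin_cases a <;> simp
    · obtain _ | ⟨a₁, _ | ⟨a₂, _ | ⟨a₃, _ | ⟨a₄, A'⟩⟩⟩⟩ := A <;> simp [phi] at h
      obtain ⟨rfl, rfl, rfl, rfl, h⟩ := h
      obtain ⟨u, v, rfl, rfl, rfl⟩ := ih A' h
      exact ⟨0 :: u, v, by simp, by simp [phi], rfl⟩
    · obtain _ | ⟨a₁, A'⟩ := A <;> simp [phi] at h
      · exact ⟨[], w, by simp, by simp [phi], h.symm⟩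
      · obtain ⟨rfl, h⟩ := h
        obtain ⟨u, v, rfl, rfl, rfl⟩ := ih A' h
        exact ⟨1 :: u, v, by simp, by simp [phi], rfl⟩

theorem exists_split_of_sublist_phi (i j : ℕ) (w : List (Fin 2))
    (h : (pow0202 i ++ [1] ++ pow0202 j).Sublist (phi w)) :
    ∃ u v, w = u ++ 1 :: v ∧ i ≤ u.count 0 ∧ j ≤ v.count 0 := by
  rw [List.append_assoc, List.append_sublist_iff] at h
  obtain ⟨r₁, r₂, hw, h₁, h₂⟩ := h
  rw [List.singleton_append, List.cons_sublist_iff] at h₂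
  obtain ⟨s₁, s₂, rfl, hs₁, hs₂⟩ := h₂
  obtain ⟨t₁, t₂, rfl⟩ := List.append_of_mem hs₁
  obtain ⟨u, v, rfl, hu, hv⟩ :=
    exists_split_of_phi_eq_append_one w (r₁ ++ t₁) (t₂ ++ s₂) (by simp [hw])
  have hcu := (h₁.trans (List.sublist_append_left r₁ t₁)).count_le 0
  have hcv := (hs₂.trans (List.sublist_append_right t₂ s₂)).count_le 0
  rw [hu, count_zero_phi, count_zero_pow0202] at hcu
  rw [hv, count_zero_phi, count_zero_pow0202] at hcv
  exact ⟨u, v, rfl, by omega, by omega⟩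

/-- The numbers of `0`s preceding the `1`s of `w` take at most `w.count 1` values. -/
theorem exists_finset_count_zero_before_one (w : List (Fin 2)) :
    ∃ F : Finset ℕ, F.card ≤ w.count 1 ∧ ∀ u v, w = u ++ 1 :: v → u.count 0 ∈ F := by
  induction w with
  | nil => exact ⟨∅, by simp⟩
  | cons a w ih =>
    obtain ⟨F, hF, hmem⟩ := ih
    obtain rfl | rfl : a = 0 ∨ a = 1 := by fin_cases a <;> simp
    · refine ⟨F.image (· + 1), Finset.card_image_le.trans (by simpa using hF), ?_⟩
      rintro (_ | ⟨b, u⟩) v h <;> simp at h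
      obtain ⟨rfl, h⟩ := h
      simpa using hmem u v h
    · refine ⟨insert 0 F, (Finset.card_insert_le _ _).trans (by simpa using hF), ?_⟩
      rintro (_ | ⟨b, u⟩) v h <;> simp at h
      · simp
      · obtain ⟨rfl, h⟩ := h
        simpa using Or.inr (hmem u v h)

theorem stmt_7 (n : ℕ) (hn : 0 < n) (hne : Even n) (w : List (Fin 2)) (k : ℕ)
    (hsup : ∀ i ≤ n ^ 2, (Sword n i).Sublist (phi w))
    (h0 : w.count 0 = n ^ 2 - 1 + k) (hk1 : 1 ≤ k) :
    ⌈((n : ℚ) ^ 2 + 1) / (k : ℚ)⌉ ≤ (w.count 1 : ℤ) := by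
  obtain ⟨F, hF, hmem⟩ := exists_finset_count_zero_before_one w
  have hn2 : 0 < n ^ 2 := by positivity
  have hcover : Finset.range (n ^ 2 + 1) ⊆ F.biUnion fun p => Finset.Ioc (p - k : ℤ) p
      |>.preimage (Nat.cast : ℕ → ℤ) Nat.cast_injective.injOn := by
    intro i hi
    rw [Finset.mem_range] at hi
    obtain ⟨u, v, rfl, hu, hv⟩ := exists_split_of_sublist_phi _ _ w (hsup i (by omega))
    simp only [Finset.mem_biUnion, Finset.mem_preimage, Finset.mem_Ioc]
    refine ⟨u.count 0, hmem u v rfl, ?_⟩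
    simp at h0
    omega
  have hcard : n ^ 2 + 1 ≤ F.card * k := by
    have h := (Finset.card_le_card hcover).trans (Finset.card_biUnion_le_card_mul _ _ k ?_)
    · simpa using h
    · intro p _
      refine (Finset.card_le_card_of_injOn (Nat.cast : ℕ → ℤ) (t := Finset.Ioc (p - k : ℤ) p)
        (fun x hx => by simpa using hx) Nat.cast_injective.injOn).trans ?_
      simp
  have hfinal : n ^ 2 + 1 ≤ w.count 1 * k := hcard.trans (Nat.mul_le_mul_right k hF)
  rw [Int.ceil_le, div_le_iff₀ (by exact_mod_cast hk1)]
  exact_mod_cast hfinal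
end

section
/- Let n be a positive even integer and let L_n = {S_0, …, S_{n²}} with S_i = (0202)^i 1 (0202)^{n²−i} over Σ₃ = {0,1,2}. Then the word S_min = 1 ((02)^n 1)^{2n} (02)^{n−2} is a common supersequence of L_n, and its length is 4n² + 4n − 3. -/
/-- `x^k` : concatenation of `k` copies of the word `x`. -/
def listPow (x : List (Fin 3)) (k : ℕ) : List (Fin 3) := (List.replicate k x).flatten

/-- `S_min = 1 ((02)^n 1)^{2n} (02)^{n-2}`. -/
def Smin (n : ℕ) : List (Fin 3) :=
  [1] ++ listPow (listPow [0, 2] n ++ [1]) (2 * n) ++ listPow [0, 2] (n - 2)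

theorem listPow_succ (x : List (Fin 3)) (k : ℕ) : listPow x (k + 1) = x ++ listPow x k := by
  simp [listPow, List.replicate_succ]

theorem listPow_add (x : List (Fin 3)) (a b : ℕ) :
    listPow x (a + b) = listPow x a ++ listPow x b := by
  rw [listPow, List.replicate_add, List.flatten_append, listPow, listPow]

theorem length_listPow (x : List (Fin 3)) (k : ℕ) : (listPow x k).length = k * x.length := by
  simp [listPow]

theorem listPow_sublist_of_le (x : List (Fin 3)) {a b : ℕ} (h : a ≤ b) :
    (listPow x a).Sublist (listPow x b) := by
  obtain ⟨c, rfl⟩ := Nat.exists_eq_add_of_le h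
  rw [listPow_add]
  exact List.sublist_append_left _ _

theorem pow0202_eq_listPow (k : ℕ) : pow0202 k = listPow [0, 2] (2 * k) := by
  induction k with
  | zero => rfl
  | succ k ih =>
    have h : pow0202 (k + 1) = [0, 2, 0, 2] ++ pow0202 k := listPow_succ _ k
    rw [h, ih, Nat.mul_succ, listPow_succ, listPow_succ]
    rfl

theorem listPow_mul_sublist (x y : List (Fin 3)) (n j : ℕ) :
    (listPow x (j * n)).Sublist (listPow (listPow x n ++ y) j) := by
  induction j with
  | zero => simp [listPow]
  | succ j ih =>
    rw [Nat.succ_mul, Nat.add_comm, listPow_add, listPow_succ]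
    exact (List.sublist_append_left _ _).append ih

theorem listPow_mul_append_sublist (x y : List (Fin 3)) (n j : ℕ) :
    (listPow x (j * n) ++ y).Sublist (y ++ listPow (listPow x n ++ y) j) := by
  induction j with
  | zero => simp [listPow]
  | succ j ih =>
    rw [Nat.succ_mul, Nat.add_comm, listPow_add, listPow_succ, List.append_assoc,
      List.append_assoc]
    exact ((List.Sublist.refl _).append ih).trans (List.sublist_append_right _ _)

/-- Matching the letter `1` of `S_i` with the `1` that follows the `j`-th block of `S_min`. -/
theorem Sword_sublist_Smin {n i j : ℕ} (hj : j ≤ 2 * n) (hl : 2 * i ≤ j * n)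
    (hr : 2 * (n ^ 2 - i) ≤ (2 * n - j) * n + (n - 2)) : (Sword n i).Sublist (Smin n) := by
  have hsplit : Smin n = ([1] ++ listPow (listPow [0, 2] n ++ [1]) j) ++
      (listPow (listPow [0, 2] n ++ [1]) (2 * n - j) ++ listPow [0, 2] (n - 2)) := by
    unfold Smin
    conv_lhs => rw [← Nat.add_sub_cancel' hj, listPow_add]
    simp only [List.append_assoc]
  rw [hsplit, Sword, pow0202_eq_listPow, pow0202_eq_listPow]
  refine List.Sublist.append ?_ ?_
  · exact ((listPow_sublist_of_le _ hl).append (List.Sublist.refl _)).trans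
      (listPow_mul_append_sublist _ _ n j)
  · refine (listPow_sublist_of_le _ hr).trans ?_
    rw [listPow_add]
    exact (listPow_mul_sublist _ _ n _).append (List.Sublist.refl _)

theorem stmt_8 (n : ℕ) (hn : 0 < n) (hne : Even n) :
    (∀ i ≤ n ^ 2, (Sword n i).Sublist (Smin n)) ∧
      (Smin n).length = 4 * n ^ 2 + 4 * n - 3 := by
  obtain ⟨m, rfl⟩ := hne
  have hm : 0 < m := by omega
  constructor
  · intro i hi
    obtain ⟨j, hlo, hhi⟩ : ∃ j, i ≤ j * m ∧ j * m < i + m := by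
      refine ⟨(i + m - 1) / m, ?_, ?_⟩
      · have := Nat.lt_div_mul_add (a := i + m - 1) hm
        omega
      · have := Nat.div_mul_le_self (i + m - 1) m
        omega
    have hj : j ≤ 2 * (m + m) := by
      by_contra! h
      nlinarith
    refine Sword_sublist_Smin hj (by linarith) ?_
    obtain ⟨c, hc⟩ := Nat.exists_eq_add_of_le hj
    rw [hc, Nat.add_sub_cancel_left]
    have hsq : (m + m) ^ 2 = j * m + c * m := by
      rw [← Nat.add_mul, ← hc]
      ring
    rw [hsq, Nat.mul_add c]
    omega
  · simp only [Smin, List.length_append, length_listPow, List.length_cons, List.length_nil]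
    obtain ⟨k, rfl⟩ := Nat.exists_eq_add_of_le' hm
    have h2 : k + 1 + (k + 1) - 2 = 2 * k := by omega
    rw [h2]
    apply Nat.eq_sub_of_add_eq
    ring
end

section
/- Let n be a positive even integer and let L_n = {S_0, …, S_{n²}} with S_i = (0202)^i 1 (0202)^{n²−i} over Σ₃ = {0,1,2}. Then every common supersequence of L_n over Σ₃ has length at least 4n² + 4n − 3. (Hence S_min = 1 ((02)^n 1)^{2n} (02)^{n−2} is a shortest common supersequence of L_n.) -/
theorem countP_ne_one_pow0202 (k : ℕ) : (pow0202 k).countP (· ≠ 1) = 4 * k := by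
  induction k with
  | zero => simp [pow0202]
  | succ k ih =>
    have h : pow0202 (k + 1) = [0, 2, 0, 2] ++ pow0202 k := by
      simp [pow0202, List.replicate_succ]
    have h' : ([0, 2, 0, 2] : List (Fin 3)).countP (· ≠ 1) = 4 := by decide
    rw [h, List.countP_append, ih, h']
    ring

/-- An occurrence of `Sword n i` in `S` splits `S` at the letter matched with the unique `1`. -/
theorem exists_split_of_sword_sublist {n i : ℕ} {S : List (Fin 3)} (h : (Sword n i).Sublist S) :
    ∃ P Q, S = P ++ 1 :: Q ∧ 4 * i ≤ P.countP (· ≠ 1) ∧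
      4 * (n ^ 2 - i) ≤ Q.countP (· ≠ 1) := by
  rw [Sword, List.append_assoc, List.append_sublist_iff] at h
  obtain ⟨A, B, rfl, hA, hB⟩ := h
  rw [List.singleton_append, List.cons_sublist_iff] at hB
  obtain ⟨C, D, rfl, hC, hD⟩ := hB
  obtain ⟨U, V, rfl⟩ := List.append_of_mem hC
  refine ⟨A ++ U, V ++ D, by simp, ?_, ?_⟩
  · have := hA.countP_le (p := (· ≠ 1))
    rw [countP_ne_one_pow0202] at this
    rw [List.countP_append]
    omega
  · have := hD.countP_le (p := (· ≠ 1))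
    rw [countP_ne_one_pow0202] at this
    rw [List.countP_append]
    omega

/-- A split of a list at an occurrence of `a` is determined by the number of earlier `a`s. -/
theorem split_unique_of_count_eq {α : Type*} [DecidableEq α] {a : α} {P Q P' Q' : List α}
    (h : P ++ a :: Q = P' ++ a :: Q') (hc : P.count a = P'.count a) : P = P' ∧ Q = Q' := by
  induction P generalizing P' with
  | nil =>
    cases P' with
    | nil => simpa using h
    | cons b P' =>
      simp only [List.nil_append, List.cons_append, List.cons.injEq] at h
      simp [← h.1] at hc
  | cons b P ih =>
    cases P' with
    | nil =>
      simp only [List.nil_append, List.cons_append, List.cons.injEq] at h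
      simp [h.1] at hc
    | cons c P' =>
      simp only [List.cons_append, List.cons.injEq] at h
      obtain ⟨rfl, h⟩ := h
      have := ih h (by simpa [List.count_cons] using hc)
      simpa using this

/-- Each `1` of a common supersequence serves at most `e / 4 + 1` words, where `4 * n ^ 2 + e`
is the number of letters other than `1`. -/
theorem card_le_count_one_mul {n e : ℕ} {S : List (Fin 3)}
    (hS : ∀ i ≤ n ^ 2, (Sword n i).Sublist S) (he : S.countP (· ≠ 1) = 4 * n ^ 2 + e) :
    n ^ 2 + 1 ≤ (e / 4 + 1) * S.count 1 := by
  have hsplit : ∀ i, ∃ P Q, i ≤ n ^ 2 → S = P ++ 1 :: Q ∧ 4 * i ≤ P.countP (· ≠ 1) ∧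
      4 * (n ^ 2 - i) ≤ Q.countP (· ≠ 1) := by
    intro i
    by_cases hi : i ≤ n ^ 2
    · obtain ⟨P, Q, h⟩ := exists_split_of_sword_sublist (hS i hi)
      exact ⟨P, Q, fun _ => h⟩
    · exact ⟨[], [], fun h => absurd h hi⟩
  choose P Q hPQ using hsplit
  have hmaps : ∀ i ∈ Finset.range (n ^ 2 + 1), (P i).count 1 ∈ Finset.range (S.count 1) := by
    intro i hi
    obtain ⟨h, -, -⟩ := hPQ i (by simpa [Nat.lt_succ_iff] using hi)
    have := congrArg (List.count 1) h
    simp only [List.count_append, List.count_cons_self] at this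
    rw [Finset.mem_range]
    omega
  have hgap : ∀ i ≤ n ^ 2, ∀ j ≤ n ^ 2, (P i).count 1 = (P j).count 1 → j ≤ i + e / 4 := by
    intro i hi j hj hij
    obtain ⟨h, -, hQ⟩ := hPQ i hi
    obtain ⟨h', hP, -⟩ := hPQ j hj
    obtain ⟨hPe, -⟩ := split_unique_of_count_eq (h.symm.trans h') hij
    have hc := congrArg (List.countP (· ≠ 1)) h
    rw [List.countP_append, List.countP_cons, he, hPe] at hc
    omega
  have hfiber : ∀ b ∈ Finset.range (S.count 1),
      ((Finset.range (n ^ 2 + 1)).filter fun i => (P i).count 1 = b).card ≤ e / 4 + 1 := by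
    intro b _
    set F := (Finset.range (n ^ 2 + 1)).filter fun i => (P i).count 1 = b with hF
    rcases F.eq_empty_or_nonempty with h0 | hne
    · simp [h0]
    have hmin := F.min'_mem hne
    have hsub : F ⊆ Finset.Icc (F.min' hne) (F.min' hne + e / 4) := by
      intro j hj
      refine Finset.mem_Icc.2 ⟨F.min'_le j hj, ?_⟩
      rw [hF, Finset.mem_filter, Finset.mem_range] at hj
      generalize F.min' hne = i at hmin
      rw [hF, Finset.mem_filter, Finset.mem_range] at hmin
      exact hgap i (by omega) j (by omega) (hmin.2.trans hj.2.symm)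
    refine (Finset.card_le_card hsub).trans ?_
    rw [Nat.card_Icc]
    omega
  simpa using Finset.card_le_mul_card_image_of_maps_to hmaps (e / 4 + 1) hfiber

theorem stmt_9 (n : ℕ) (hn : 0 < n) (hne : Even n) :
    ∀ S : List (Fin 3), (∀ i ≤ n ^ 2, (Sword n i).Sublist S) →
      4 * n ^ 2 + 4 * n - 3 ≤ S.length := by
  intro S hS
  have hlen : S.length = S.count 1 + S.countP (· ≠ 1) := by
    rw [List.length_eq_countP_add_countP (· == 1), List.count]
    simp
  obtain ⟨e, he⟩ : ∃ e, S.countP (· ≠ 1) = 4 * n ^ 2 + e := by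
    obtain ⟨P, Q, h, -, hQ⟩ := exists_split_of_sword_sublist (hS 0 (Nat.zero_le _))
    have hc := congrArg (List.countP (· ≠ 1)) h
    rw [List.countP_append, List.countP_cons] at hc
    exact Nat.exists_eq_add_of_le (by omega)
  have hcard := card_le_count_one_mul hS he
  have hamgm : 4 * n < 4 * (e / 4 + 1) + S.count 1 := by
    generalize e / 4 + 1 = k at hcard
    generalize S.count 1 = r at hcard
    zify at hcard ⊢
    nlinarith [sq_nonneg ((4 * k : ℤ) - r)]
  omega
end

section
/- For all positive integers k and n, k + 4·⌈(n²+1)/k⌉ ≥ 4n + 1. -/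
theorem stmt_10 (k n : ℕ) (hk : 0 < k) (hn : 0 < n) :
    4 * (n : ℤ) + 1 ≤ (k : ℤ) + 4 * ⌈((n : ℚ) ^ 2 + 1) / (k : ℚ)⌉ := by
  have hkq : (0 : ℚ) < k := by exact_mod_cast hk
  have hceil := Int.le_ceil (((n : ℚ) ^ 2 + 1) / (k : ℚ))
  have hpos : 0 < ⌈((n : ℚ) ^ 2 + 1) / (k : ℚ)⌉ := Int.ceil_pos.mpr (by positivity)
  generalize ⌈((n : ℚ) ^ 2 + 1) / (k : ℚ)⌉ = c at *
  rw [div_le_iff₀ hkq] at hceil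
  have hmul : (n : ℤ) ^ 2 + 1 ≤ c * k := by exact_mod_cast hceil
  have hlt : 4 * (n : ℤ) < k + 4 * c := by
    refine lt_of_pow_lt_pow_left₀ 2 (by positivity) ?_
    nlinarith [sq_nonneg ((k : ℤ) - 4 * c)]
  omega
end

section
/- Let n be a positive integer and, for i ∈ [1:n], let A_i = (0202)^{6n(i−1)+3n} 1 (0202)^{6n(n+1−i)} over Σ₃ = {0,1,2}. Then the word ((02)^{6n} 1 (02)^{6n})^n (02)^{6n} is a common supersequence of {A_i : i ∈ [1:n]}. -/
/-- `(02)^k` over Σ₃. -/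
def pow02 (k : ℕ) : List (Fin 3) := (List.replicate k [(0 : Fin 3), 2]).flatten

/-- `A_i = (0202)^{6n(i-1)+3n} 1 (0202)^{6n(n+1-i)}`. -/
def Aword (n i : ℕ) : List (Fin 3) :=
  pow0202 (6 * n * (i - 1) + 3 * n) ++ [1] ++ pow0202 (6 * n * (n + 1 - i))

theorem pow02_add (a b : ℕ) : pow02 (a + b) = pow02 a ++ pow02 b := by
  simp only [pow02, List.replicate_add, List.flatten_append]

theorem pow0202_eq_pow02 (k : ℕ) : pow0202 k = pow02 (2 * k) := by
  induction k with
  | zero => rfl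
  | succ k ih =>
    have h : pow0202 (k + 1) = [0, 2, 0, 2] ++ pow0202 k := rfl
    rw [h, ih, show 2 * (k + 1) = 2 + 2 * k by ring, pow02_add]
    rfl

theorem pow02_sublist_flatten_replicate (c m : ℕ) :
    (pow02 (2 * c * m)).Sublist
      (List.replicate m (pow02 c ++ [1] ++ pow02 c)).flatten := by
  induction m with
  | zero => exact List.Sublist.refl _
  | succ m ih =>
    rw [List.replicate_succ, List.flatten_cons,
      show 2 * c * (m + 1) = c + c + 2 * c * m by ring, pow02_add, pow02_add]
    exact ((List.sublist_append_left _ _).append (List.Sublist.refl _)).append ih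

theorem stmt_12 (n : ℕ) (hn : 0 < n) :
    ∀ i, 1 ≤ i → i ≤ n →
      (Aword n i).Sublist
        ((List.replicate n (pow02 (6 * n) ++ [1] ++ pow02 (6 * n))).flatten
          ++ pow02 (6 * n)) := by
  intro i hi hin
  obtain ⟨j, rfl⟩ := Nat.exists_eq_add_of_le' hi
  obtain ⟨m, hm⟩ := Nat.exists_eq_add_of_le hin
  have hsub : n + 1 - (j + 1) = m + 1 := by omega
  have hrep : ∀ w : List (Fin 3), (List.replicate n w).flatten =
      (List.replicate j w).flatten ++ (w ++ (List.replicate m w).flatten) := by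
    intro w
    rw [show n = j + (m + 1) by omega, List.replicate_add, List.flatten_append,
      List.replicate_succ, List.flatten_cons]
  rw [Aword, hsub, Nat.add_sub_cancel, hrep, pow0202_eq_pow02, pow0202_eq_pow02,
    show 2 * (6 * n * j + 3 * n) = 2 * (6 * n) * j + 6 * n by ring,
    show 2 * (6 * n * (m + 1)) = 6 * n + 2 * (6 * n) * m + 6 * n by ring]
  simp only [pow02_add, List.append_assoc]
  have hj := pow02_sublist_flatten_replicate (6 * n) j
  have hm' := pow02_sublist_flatten_replicate (6 * n) m
  simp only [List.append_assoc] at hj hm'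
  exact hj.append ((List.Sublist.refl _).append ((List.Sublist.refl _).append
    ((List.Sublist.refl _).append (hm'.append (List.Sublist.refl _)))))
end

section
/- Let G, n, m, L and k be as in the context. If G has a vertex cover of size at most k, then L has a common supersequence over Σ₃ of length at most 168n² + 37n − 3 + k. -/
/-- `B_j = (0202)^j 1 (0202)^{36n²-j}`. -/
def Bword (n j : ℕ) : List (Fin 3) := pow0202 j ++ [1] ++ pow0202 (36 * n ^ 2 - j)

/-- `X_i^j = A_i B_j`. -/
def Xword (n i j : ℕ) : List (Fin 3) := Aword n i ++ Bword n j

/-- `T_l` for the edge `e_l = v_i v_j`, `i < j`. -/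
def Tword (n i j : ℕ) : List (Fin 3) :=
  pow0202 (6 * n * (i - 1)) ++ [1] ++ pow0202 (6 * n * (j - i - 1) + 3 * n) ++ [1]
    ++ pow0202 (6 * n * (n + 2 - j)) ++ pow0202 (36 * n ^ 2 - 1)

theorem pow0202_succ (k : ℕ) : pow0202 (k + 1) = [0, 2, 0, 2] ++ pow0202 k := by
  simp [pow0202, List.replicate_succ]

theorem pow0202_add (a b : ℕ) : pow0202 (a + b) = pow0202 a ++ pow0202 b := by
  simp only [pow0202, List.replicate_add, List.flatten_append]

/-- The word with `m` blocks `0202` whose boundaries are numbered from `a`, with a letter `1` at each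
boundary whose number lies in `Q`. -/
def markedWord (Q : Finset ℕ) : ℕ → ℕ → List (Fin 3)
  | a, 0 => if a ∈ Q then [1] else []
  | a, m + 1 => (if a ∈ Q then [1] else []) ++ ([0, 2, 0, 2] ++ markedWord Q (a + 1) m)

theorem length_markedWord (Q : Finset ℕ) (m a : ℕ) :
    (markedWord Q a m).length + (Q.filter (· < a)).card ≤ 4 * m + Q.card := by
  have step (a : ℕ) : (if a ∈ Q then [(1 : Fin 3)] else []).length + (Q.filter (· < a)).card
      = (Q.filter (· < a + 1)).card := by
    by_cases h : a ∈ Q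
    · have : Q.filter (· < a + 1) = insert a (Q.filter (· < a)) := by
        ext x
        simp only [Finset.mem_filter, Finset.mem_insert, Order.lt_add_one_iff, le_iff_lt_or_eq]
        constructor
        · tauto
        · rintro (rfl | h') <;> tauto
      rw [this, Finset.card_insert_of_notMem (by simp)]
      simp [h, add_comm]
    · have : Q.filter (· < a + 1) = Q.filter (· < a) := by
        ext x
        simp only [Finset.mem_filter, Order.lt_add_one_iff, le_iff_lt_or_eq]
        constructor
        · rintro ⟨hx, hlt | rfl⟩ <;> tauto
        · tauto
      rw [this]
      simp [h]
  induction m generalizing a with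
  | zero =>
    rw [markedWord, step]
    simpa using Finset.card_filter_le Q (· < a + 1)
  | succ m ih =>
    have h₁ := step a
    have h₂ := ih (a + 1)
    simp only [markedWord, List.length_append, List.length_cons, List.length_nil] at *
    omega

theorem pow0202_append_sublist_markedWord (Q : Finset ℕ) {w : List (Fin 3)} {a b d m : ℕ}
    (hb : b ≤ d) (h : w.Sublist (markedWord Q (a + d) m)) :
    (pow0202 b ++ w).Sublist (markedWord Q a (d + m)) := by
  induction d generalizing a b with
  | zero =>
    obtain rfl : b = 0 := by omega
    simpa [pow0202] using h
  | succ d ih =>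
    have h' : w.Sublist (markedWord Q (a + 1 + d) m) := by
      rwa [show a + 1 + d = a + (d + 1) by omega]
    rw [show d + 1 + m = d + m + 1 by omega, markedWord]
    refine List.Sublist.trans ?_ (List.sublist_append_right _ _)
    cases b with
    | zero => exact (ih (Nat.zero_le d) h').trans (List.sublist_append_right _ _)
    | succ b =>
      rw [pow0202_succ, List.append_assoc]
      exact (ih (by omega) h').append_left _

theorem one_pow0202_append_sublist_markedWord (Q : Finset ℕ) {w : List (Fin 3)} {a b d m : ℕ}
    (ha : a ∈ Q) (hd : 0 < d) (hb : b ≤ d) (h : w.Sublist (markedWord Q (a + d) m)) :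
    ([1] ++ (pow0202 b ++ w)).Sublist (markedWord Q a (d + m)) := by
  obtain ⟨d, rfl⟩ : ∃ d', d = d' + 1 := ⟨d - 1, by omega⟩
  have h' : w.Sublist (markedWord Q (a + 1 + d) m) := by
    rwa [show a + 1 + d = a + (d + 1) by omega]
  rw [show d + 1 + m = d + m + 1 by omega, markedWord, if_pos ha]
  refine List.Sublist.append_left ?_ _
  cases b with
  | zero =>
    exact (pow0202_append_sublist_markedWord Q (Nat.zero_le d) h').trans
      (List.sublist_append_right _ _)
  | succ b =>
    rw [pow0202_succ, List.append_assoc]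
    exact (pow0202_append_sublist_markedWord Q (by omega) h').append_left _

theorem one_pow0202_sublist_markedWord (Q : Finset ℕ) {a c m : ℕ} (ha : a ∈ Q) (hc : c ≤ m) :
    ([1] ++ pow0202 c).Sublist (markedWord Q a m) := by
  rcases Nat.eq_zero_or_pos m with rfl | hm
  · obtain rfl : c = 0 := by omega
    simp [pow0202, markedWord, ha]
  · simpa using one_pow0202_append_sublist_markedWord Q (w := []) (m := 0) ha hm hc
      (List.nil_sublist _)

/-- A word with two letters `1` embeds into a marked word as soon as two marks `p < q` leave enough
blocks before, between and after them. -/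
theorem two_ones_sublist_markedWord (Q : Finset ℕ) {N a b c p q : ℕ} (hp : p ∈ Q) (hq : q ∈ Q)
    (hpq : p < q) (ha : a ≤ p) (hb : p + b ≤ q) (hc : q + c ≤ N) :
    (pow0202 a ++ ([1] ++ (pow0202 b ++ ([1] ++ pow0202 c)))).Sublist (markedWord Q 0 N) := by
  obtain ⟨d, rfl⟩ : ∃ d, q = p + d := ⟨q - p, by omega⟩
  obtain ⟨r, rfl⟩ : ∃ r, N = p + (d + r) := ⟨N - (p + d), by omega⟩
  refine pow0202_append_sublist_markedWord Q ha ?_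
  rw [zero_add]
  exact one_pow0202_append_sublist_markedWord Q hp (by omega) (by omega)
    (one_pow0202_sublist_markedWord Q hq (by omega))

/-- The marks of the supersequence built from a vertex cover `V`. -/
def coverMarks (n : ℕ) (V : Finset ℕ) : Finset ℕ :=
  (Finset.Icc 1 n).image (fun i => 6 * n * (i - 1) + 3 * n) ∪
    (V.image (fun i => 6 * n * (i - 1)) ∪
      (Finset.range (12 * n + 1)).image (fun t => 6 * n ^ 2 + 6 * n - 1 + 3 * n * t))

theorem card_coverMarks_le (n : ℕ) (V : Finset ℕ) :
    (coverMarks n V).card ≤ n + (V.card + (12 * n + 1)) := by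
  refine (Finset.card_union_le _ _).trans (add_le_add ?_ ((Finset.card_union_le _ _).trans
    (add_le_add Finset.card_image_le ?_)))
  · simpa using Finset.card_image_le (s := Finset.Icc 1 n) (f := fun i => 6 * n * (i - 1) + 3 * n)
  · simpa using Finset.card_image_le (s := Finset.range (12 * n + 1))
      (f := fun t => 6 * n ^ 2 + 6 * n - 1 + 3 * n * t)

theorem vertex_mem_coverMarks {n i : ℕ} (V : Finset ℕ) (h₁ : 1 ≤ i) (h₂ : i ≤ n) :
    6 * n * (i - 1) + 3 * n ∈ coverMarks n V :=
  Finset.mem_union_left _ (Finset.mem_image.2 ⟨i, Finset.mem_Icc.2 ⟨h₁, h₂⟩, rfl⟩)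

theorem cover_mem_coverMarks {n i : ℕ} {V : Finset ℕ} (h : i ∈ V) :
    6 * n * (i - 1) ∈ coverMarks n V :=
  Finset.mem_union_right _ (Finset.mem_union_left _ (Finset.mem_image.2 ⟨i, h, rfl⟩))

theorem tail_mem_coverMarks {n t : ℕ} (V : Finset ℕ) (h : t ≤ 12 * n) :
    6 * n ^ 2 + 6 * n - 1 + 3 * n * t ∈ coverMarks n V :=
  Finset.mem_union_right _ (Finset.mem_union_right _
    (Finset.mem_image.2 ⟨t, Finset.mem_range.2 (by omega), rfl⟩))

theorem Xword_sublist_markedWord {n i j : ℕ} (V : Finset ℕ) (h₁ : 1 ≤ i) (h₂ : i ≤ n)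
    (hj : j ≤ 36 * n ^ 2) :
    (Xword n i j).Sublist (markedWord (coverMarks n V) 0 (42 * n ^ 2 + 6 * n - 1)) := by
  have hlt : j % (3 * n) < 3 * n := Nat.mod_lt _ (by omega)
  have hdiv : 3 * n * (j / (3 * n)) + j % (3 * n) = j := Nat.div_add_mod _ _
  have ht : j / (3 * n) ≤ 12 * n := by
    refine Nat.div_le_of_le_mul ?_
    nlinarith
  have hword : Xword n i j = pow0202 (6 * n * (i - 1) + 3 * n) ++ ([1] ++
      (pow0202 (6 * n * (n + 1 - i) + j) ++ ([1] ++ pow0202 (36 * n ^ 2 - j)))) := by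
    simp [Xword, Aword, Bword, pow0202_add]
  have hsum : 6 * n * (i - 1) + 6 * n * (n + 1 - i) = 6 * n ^ 2 := by
    rw [← mul_add, show i - 1 + (n + 1 - i) = n by omega]
    ring
  rw [hword]
  refine two_ones_sublist_markedWord _ (vertex_mem_coverMarks V h₁ h₂) (tail_mem_coverMarks V ht)
    ?_ ?_ ?_ ?_ <;> omega

theorem Tword_sublist_markedWord {n i j : ℕ} {V : Finset ℕ} (hi : 1 ≤ i) (hij : i < j)
    (hj : j ≤ n) (h : i ∈ V ∨ j ∈ V) :
    (Tword n i j).Sublist (markedWord (coverMarks n V) 0 (42 * n ^ 2 + 6 * n - 1)) := by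
  have hword : Tword n i j = pow0202 (6 * n * (i - 1)) ++ ([1] ++
      (pow0202 (6 * n * (j - i - 1) + 3 * n) ++ ([1] ++
        pow0202 (6 * n * (n + 2 - j) + (36 * n ^ 2 - 1))))) := by
    simp [Tword, pow0202_add]
  have hn : 1 ≤ n ^ 2 := Nat.one_le_pow _ _ (by omega)
  have hgap : 6 * n * (i - 1) + 6 * n * (j - i - 1) = 6 * n * (j - 1 - 1) := by
    rw [← mul_add, show i - 1 + (j - i - 1) = j - 1 - 1 by omega]
  have hnext : 6 * n * (j - 1 - 1) + 6 * n = 6 * n * (j - 1) := by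
    rw [← Nat.mul_succ, show (j - 1 - 1).succ = j - 1 by omega]
  have hsum : 6 * n * (j - 1 - 1) + 6 * n * (n + 2 - j) = 6 * n ^ 2 := by
    rw [← mul_add, show j - 1 - 1 + (n + 2 - j) = n by omega]
    ring
  rw [hword]
  rcases h with h | h
  · refine two_ones_sublist_markedWord _ (cover_mem_coverMarks h)
      (vertex_mem_coverMarks (i := j - 1) V (by omega) (by omega)) ?_ ?_ ?_ ?_ <;> omega
  · refine two_ones_sublist_markedWord _ (vertex_mem_coverMarks V hi (by omega))
      (cover_mem_coverMarks h) ?_ ?_ ?_ ?_ <;> omega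

theorem stmt_13 (n k : ℕ) (hn : 1 ≤ n) (E : Finset (ℕ × ℕ))
    (hE : ∀ e ∈ E, 1 ≤ e.1 ∧ e.1 < e.2 ∧ e.2 ≤ n)
    (hcov : ∃ V' : Finset ℕ, V' ⊆ Finset.Icc 1 n ∧ V'.card ≤ k ∧
      ∀ e ∈ E, e.1 ∈ V' ∨ e.2 ∈ V') :
    ∃ S : List (Fin 3), S.length ≤ 168 * n ^ 2 + 37 * n - 3 + k ∧
      (∀ i j, 1 ≤ i → i ≤ n → j ≤ 36 * n ^ 2 → (Xword n i j).Sublist S) ∧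
      (∀ e ∈ E, (Tword n e.1 e.2).Sublist S) := by
  obtain ⟨V, -, hcard, hV⟩ := hcov
  refine ⟨markedWord (coverMarks n V) 0 (42 * n ^ 2 + 6 * n - 1), ?_,
    fun i j h₁ h₂ hj => Xword_sublist_markedWord V h₁ h₂ hj,
    fun e he => Tword_sublist_markedWord (hE e he).1 (hE e he).2.1 (hE e he).2.2 (hV e he)⟩
  have hlen := length_markedWord (coverMarks n V) (42 * n ^ 2 + 6 * n - 1) 0
  have hmarks := card_coverMarks_le n V
  omega
end

section
/- Let G, n, m and k (0 ≤ k ≤ n) be as in the context. Let w be a word over Σ₂ = {0,1} such that S = φ(w) is a common supersequence of {X_i^j : i ∈ [1:n], j ∈ [0:36n²]} and |S| ≤ 168n² + 37n − 3 + k, and write w = w' w'' where w' is the shortest prefix of w containing exactly 6n² + 3n occurrences of 0. Let e_l = v_i v_j with i < j be an edge of G. If w' contains no occurrence of the letter 1 whose number of preceding 0's (within w') lies in the interval [6n(i−1), 6n(i−1) + 3n], and no occurrence of 1 whose number of preceding 0's lies in [6n(j−1), 6n(j−1) + 3n], then T_l is not a subsequence of S. -/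
theorem phi_append (u v : List (Fin 2)) : phi (u ++ v) = phi u ++ phi v := by
  induction u with
  | nil => rfl
  | cons a u ih => simp [phi, ih]

theorem phi_replicate_zero (k : ℕ) : phi (List.replicate k 0) = pow0202 k := by
  induction k with
  | zero => rfl
  | succ k ih =>
    rw [List.replicate_succ, phi, ih]
    simp [pow0202, List.replicate_succ]

theorem phi_cons_one (u : List (Fin 2)) : phi (1 :: u) = 1 :: phi u := rfl

theorem length_phi (w : List (Fin 2)) :
    (phi w).length = 4 * w.count 0 + w.count 1 := by
  induction w with
  | nil => rfl
  | cons a w ih =>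
    fin_cases a <;> simp [phi, ih] <;> ring

/-- The morphism `phi` reflects the subsequence relation. -/
theorem sublist_of_phi_sublist_phi {u w : List (Fin 2)} (h : (phi u).Sublist (phi w)) :
    u.Sublist w := by
  induction w generalizing u with
  | nil =>
    cases u with
    | nil => exact List.Sublist.refl _
    | cons a u => fin_cases a <;> simp [phi] at h
  | cons b w ih =>
    cases u with
    | nil => exact List.nil_sublist _
    | cons a u =>
      fin_cases a <;> fin_cases b <;> simp [phi, List.cons_sublist_cons'] at h ⊢
      · exact ih h
      · exact ih (u := 0 :: u) (by simpa [phi] using h)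
      · have h' : (phi (1 :: u)).Sublist (phi w) := by
          simpa [phi, List.sublist_cons_iff] using h
        exact ih h'
      · exact ih h

/-- A letter of a subsequence splits the ambient word at a matching occurrence. -/
theorem exists_split_of_append_cons_sublist {α : Type*} {u v w : List α} {a : α}
    (h : (u ++ a :: v).Sublist w) :
    ∃ p q, w = p ++ a :: q ∧ u.Sublist p ∧ v.Sublist q := by
  obtain ⟨r, s, rfl, hr, hs⟩ := List.append_sublist_iff.1 h
  obtain ⟨s₁, s₂, rfl, ha, hv⟩ := List.cons_sublist_iff.1 hs
  obtain ⟨x, y, rfl⟩ := List.append_of_mem ha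
  exact ⟨r ++ x, y ++ s₂, by simp, hr.trans (List.sublist_append_left _ _),
    hv.trans (List.sublist_append_right _ _)⟩

/-- Among two prefixes of a word, one with strictly more zeros extends the other. -/
theorem prefix_of_count_lt {p q w : List (Fin 2)} (hp : p <+: w) (hq : q <+: w)
    (h : p.count 0 < q.count 0) : p <+: q := by
  rcases List.prefix_or_prefix_of_prefix hp hq with h' | h'
  · exact h'
  · have := h'.sublist.count_le 0
    omega

/-- If every window of ranks `[c + j, c + j + d)` with `j ≤ N` contains an occurrence of `1`,
then there are more than `t` occurrences whenever `d * t ≤ N`. -/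
theorem lt_count_one_of_windows {w : List (Fin 2)} {c d N : ℕ}
    (hwin : ∀ j ≤ N, ∃ p q, w = p ++ 1 :: q ∧ c + j ≤ p.count 0 ∧ p.count 0 < c + j + d)
    (t : ℕ) (ht : d * t ≤ N) : t < w.count 1 := by
  suffices H : ∃ p q, w = p ++ 1 :: q ∧ p.count 0 < c + d * t + d ∧ t ≤ p.count 1 by
    obtain ⟨p, q, rfl, -, h⟩ := H
    simp
    omega
  induction t with
  | zero =>
    obtain ⟨p, q, hw, -, h⟩ := hwin 0 (Nat.zero_le _)
    exact ⟨p, q, hw, by simpa using h, Nat.zero_le _⟩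
  | succ t ih =>
    rw [Nat.mul_succ] at ht ⊢
    obtain ⟨p, q, hw, hp, hpt⟩ := ih (by omega)
    obtain ⟨p', q', hw', hlo, hhi⟩ := hwin _ ht
    have hpre : p ++ [1] <+: p' := by
      refine prefix_of_count_lt (w := w) ⟨q, by simp [hw]⟩ ⟨1 :: q', hw'.symm⟩ ?_
      simp
      omega
    have hone := hpre.sublist.count_le 1
    simp at hone
    exact ⟨p', q', hw', by omega, by omega⟩

theorem stmt_16 (n k : ℕ) (hn : 1 ≤ n) (hk : k ≤ n)
    (i j : ℕ) (hi : 1 ≤ i) (hij : i < j) (hj : j ≤ n)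
    (w w' w'' : List (Fin 2)) (hw : w = w' ++ w'')
    (hcount : w'.count 0 = 6 * n ^ 2 + 3 * n)
    (hshort : ∀ p : List (Fin 2), p <+: w → p.count 0 = 6 * n ^ 2 + 3 * n →
      w'.length ≤ p.length)
    (hsupX : ∀ i' j', 1 ≤ i' → i' ≤ n → j' ≤ 36 * n ^ 2 → (Xword n i' j').Sublist (phi w))
    (hlen : (phi w).length ≤ 168 * n ^ 2 + 37 * n - 3 + k)
    (hno : ∀ p q : List (Fin 2), w' = p ++ [1] ++ q →
      ¬(6 * n * (i - 1) ≤ p.count 0 ∧ p.count 0 ≤ 6 * n * (i - 1) + 3 * n) ∧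
      ¬(6 * n * (j - 1) ≤ p.count 0 ∧ p.count 0 ≤ 6 * n * (j - 1) + 3 * n)) :
    ¬ (Tword n i j).Sublist (phi w) := by
  intro hT
  have hX : ∀ j' ≤ 36 * n ^ 2, ∃ p q, w = p ++ 1 :: q ∧
      6 * n ^ 2 + 3 * n + j' ≤ p.count 0 ∧ 36 * n ^ 2 - j' ≤ q.count 0 := by
    intro j' hj'
    have h := hsupX 1 j' le_rfl hn hj'
    have e : Xword n 1 j' = phi ((List.replicate (3 * n) 0 ++ [1] ++
        List.replicate (6 * n * n) 0 ++ List.replicate j' 0) ++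
        1 :: List.replicate (36 * n ^ 2 - j') 0) := by
      simp [phi_append, phi_replicate_zero, phi_cons_one, Xword, Aword, Bword,
        -List.replicate_append_replicate]
    rw [e] at h
    obtain ⟨p, q, hpq, hp, hq⟩ :=
      exists_split_of_append_cons_sublist (sublist_of_phi_sublist_phi h)
    have hp0 := hp.count_le 0
    have hq0 := hq.count_le 0
    simp at hp0 hq0
    exact ⟨p, q, hpq, by nlinarith, by omega⟩
  have hzeros : 42 * n ^ 2 + 9 * n ≤ w.count 0 := by
    have hgap : ∀ p q, w = p ++ 1 :: q → p.count 0 < 6 * n ^ 2 + 3 * n →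
        ¬(6 * n * (i - 1) ≤ p.count 0 ∧ p.count 0 ≤ 6 * n * (i - 1) + 3 * n) ∧
        ¬(6 * n * (j - 1) ≤ p.count 0 ∧ p.count 0 ≤ 6 * n * (j - 1) + 3 * n) := by
      intro p q hpq hlt
      have hpre : p ++ [1] <+: w' :=
        prefix_of_count_lt (w := w) ⟨q, by simp [hpq]⟩ ⟨w'', hw.symm⟩ (by simp; omega)
      obtain ⟨s, hs⟩ := hpre
      exact hno p s hs.symm
    have e : Tword n i j = phi (List.replicate (6 * n * (i - 1)) 0 ++ 1 ::
        (List.replicate (6 * n * (j - i - 1) + 3 * n) 0 ++ 1 ::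
          (List.replicate (6 * n * (n + 2 - j)) 0 ++ List.replicate (36 * n ^ 2 - 1) 0))) := by
      simp [phi_append, phi_replicate_zero, phi_cons_one, Tword,
        -List.replicate_append_replicate]
    rw [e] at hT
    obtain ⟨p, r, hpr, hp, hr⟩ :=
      exists_split_of_append_cons_sublist (sublist_of_phi_sublist_phi hT)
    obtain ⟨s, q, rfl, hs, hq⟩ := exists_split_of_append_cons_sublist hr
    have hp0 := hp.count_le 0
    have hs0 := hs.count_le 0
    have hq0 := hq.count_le 0
    simp at hp0 hs0 hq0
    have hg₂ := hgap (p ++ 1 :: s) q (by simp [hpr])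
    have hw0 : w.count 0 = p.count 0 + s.count 0 + q.count 0 := by
      simp [hpr]
      omega
    have hg₁ := hgap p _ hpr
    simp only [List.count_append, List.count_cons] at hg₂
    obtain ⟨a, rfl⟩ := Nat.exists_eq_add_of_le hi
    obtain ⟨b, rfl⟩ := Nat.exists_eq_add_of_lt hij
    obtain ⟨c, hc⟩ := Nat.exists_eq_add_of_le hj
    have e₁ : 1 + a - 1 = a := by omega
    have e₂ : 1 + a + b + 1 - (1 + a) - 1 = b := by omega
    have e₃ : n + 2 - (1 + a + b + 1) = c + 2 := by omega
    have e₄ : 1 + a + b + 1 - 1 = a + b + 1 := by omega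
    rw [e₁] at hp0
    rw [e₁, e₄] at hg₁ hg₂
    rw [e₂] at hs0
    rw [e₃] at hq0
    have hsq : n ^ 2 = n * a + n * b + n * c + 2 * n := by
      conv_lhs => rw [sq]; arg 2; rw [hc]
      ring
    simp only [mul_add, mul_assoc, mul_one] at hp0 hs0 hq0 hg₁ hg₂
    simp at hg₁ hg₂
    omega
  have hlen' := length_phi w
  have hones : 2 * n < w.count 1 := by
    refine lt_count_one_of_windows (c := 6 * n ^ 2 + 3 * n) (d := 7 * n) (N := 36 * n ^ 2)
      (fun j' hj' => ?_) (2 * n) (by nlinarith)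
    obtain ⟨p, q, hpq, hp, hq⟩ := hX j' hj'
    refine ⟨p, q, hpq, hp, ?_⟩
    have hw0 : w.count 0 = p.count 0 + q.count 0 := by simp [hpq]
    omega
  omega
end

section
/- Let L be the set of all seven words of length 3 over Σ₂ = {0,1} except 111, i.e. L = {000, 001, 010, 011, 100, 101, 110}. Then 01010 is a common supersequence of L of length 5, every common supersequence of L has length at least 5, and 01010 is the unique common supersequence of L of length 5. -/
/-- All seven words of length 3 over Σ₂ except 111. -/
def L18 : Set (List (Fin 2)) :=
  {[0, 0, 0], [0, 0, 1], [0, 1, 0], [0, 1, 1], [1, 0, 0], [1, 0, 1], [1, 1, 0]}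

theorem count_zero_add_count_one (S : List (Fin 2)) : S.count 0 + S.count 1 = S.length := by
  induction S with
  | nil => rfl
  | cons a S ih => fin_cases a <;> simp <;> omega

theorem stmt_18 :
    (∀ w ∈ L18, w.Sublist [0, 1, 0, 1, 0]) ∧
    ([0, 1, 0, 1, 0] : List (Fin 2)).length = 5 ∧
    (∀ S : List (Fin 2), (∀ w ∈ L18, w.Sublist S) → 5 ≤ S.length) ∧
    (∀ S : List (Fin 2), (∀ w ∈ L18, w.Sublist S) → S.length = 5 →
      S = [0, 1, 0, 1, 0]) := by
  refine ⟨?_, rfl, fun S hS => ?_, fun S hS hlen => ?_⟩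
  · simp only [L18, Set.mem_insert_iff, Set.mem_singleton_iff, forall_eq_or_imp, forall_eq]
    decide
  · have h0 : 3 ≤ S.count 0 := (hS [0, 0, 0] (by simp [L18])).count_le 0
    have h1 : 2 ≤ S.count 1 := (hS [0, 1, 1] (by simp [L18])).count_le 1
    exact (Nat.add_le_add h0 h1).trans_eq (count_zero_add_count_one S)
  · obtain ⟨a, T, rfl, hT⟩ := List.length_eq_succ_iff.mp hlen
    obtain ⟨b, c, d, e, rfl⟩ := List.length_eq_four.mp hT
    simp only [L18, Set.mem_insert_iff, Set.mem_singleton_iff, forall_eq_or_imp,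
      forall_eq] at hS
    clear hlen hT
    revert a b c d e
    decide
end

section
/- Let τ : Σ₂* → Σ₃* be the word morphism with τ(0) = 02 and τ(1) = 12, and let L' = {τ(w) : w ∈ {0,1}³, w ≠ 111} over Σ₃ = {0,1,2}. Then 012012012 is a common supersequence of L' of length 9, every common supersequence of L' has length at least 9, and no common supersequence of L' of length 9 becomes the word 01010 after deleting all its occurrences of the letter 2. -/
/-- The morphism τ : Σ₂* → Σ₃* with τ(0) = 02 and τ(1) = 12. -/
def tau : List (Fin 2) → List (Fin 3)
  | [] => []
  | a :: w => (if a = 0 then [0, 2] else [1, 2]) ++ tau w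

/-- `L' = {τ(w) : w ∈ {0,1}³, w ≠ 111}`. -/
def L19 : Set (List (Fin 3)) :=
  {v | ∃ w : List (Fin 2), w.length = 3 ∧ w ≠ [1, 1, 1] ∧ v = tau w}

/-- Delete the first letter of a word if it is `c`: what remains to be matched of the word after
reading `c`. -/
def stripHead (c : Fin 3) : List (Fin 3) → List (Fin 3)
  | [] => []
  | a :: w => if a = c then w else a :: w

theorem stripHead_sublist {c : Fin 3} {w S : List (Fin 3)} (h : w.Sublist (c :: S)) :
    (stripHead c w).Sublist S := by
  cases w with
  | nil => exact List.nil_sublist S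
  | cons a w =>
    by_cases hac : a = c
    · subst hac
      simpa [stripHead] using h
    · simp only [stripHead, if_neg hac]
      rcases List.sublist_cons_iff.1 h with h | ⟨r, hr, -⟩
      · exact h
      · exact absurd (List.cons.inj hr).1 hac

/-- The common supersequences of length `n` of a list of words, found by a search that stops as soon
as some word is longer than the number of letters left. -/
def commonSupersequences : ℕ → List (List (Fin 3)) → List (List (Fin 3))
  | 0, ws => if ∀ w ∈ ws, w = [] then [[]] else []
  | n + 1, ws =>
    if ∀ w ∈ ws, w.length ≤ n + 1 then
      [0, 1, 2].flatMap fun c => (commonSupersequences n (ws.map (stripHead c))).map (c :: ·)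
    else []

theorem mem_commonSupersequences (S : List (Fin 3)) (ws : List (List (Fin 3)))
    (h : ∀ w ∈ ws, w.Sublist S) : S ∈ commonSupersequences S.length ws := by
  induction S generalizing ws with
  | nil => simpa [commonSupersequences] using h
  | cons c S ih =>
    have hlen : ∀ w ∈ ws, w.length ≤ S.length + 1 := fun w hw => (h w hw).length_le
    have hS : S ∈ commonSupersequences S.length (ws.map (stripHead c)) := by
      refine ih _ fun w hw => ?_
      obtain ⟨v, hv, rfl⟩ := List.mem_map.1 hw
      exact stripHead_sublist (h v hv)
    have hc : c ∈ ([0, 1, 2] : List (Fin 3)) := by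
      fin_cases c <;> decide
    rw [List.length_cons, commonSupersequences, if_pos hlen]
    exact List.mem_flatMap.2 ⟨c, hc, List.mem_map_of_mem hS⟩

/-- The words of `L19`. -/
def wordsL19 : List (List (Fin 3)) :=
  [[0, 0, 0], [0, 0, 1], [0, 1, 0], [0, 1, 1], [1, 0, 0], [1, 0, 1], [1, 1, 0]].map tau

theorem mem_L19_iff {v : List (Fin 3)} : v ∈ L19 ↔ v ∈ wordsL19 := by
  constructor
  · rintro ⟨w, hw, hne, rfl⟩
    obtain ⟨a, b, c, rfl⟩ := List.length_eq_three.1 hw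
    clear hw
    revert a b c
    decide
  · intro hv
    obtain ⟨w, hw, rfl⟩ := List.mem_map.1 hv
    have key : w.length = 3 ∧ w ≠ [1, 1, 1] := by
      revert w
      decide
    exact ⟨w, key.1, key.2, rfl⟩

theorem commonSupersequences_wordsL19_eight : commonSupersequences 8 wordsL19 = [] := by
  decide +kernel

theorem filter_ne_of_mem_commonSupersequences_nine :
    ∀ S ∈ commonSupersequences 9 wordsL19, S.filter (fun c => c ≠ 2) ≠ [0, 1, 0, 1, 0] := by
  decide +kernel

theorem stmt_19 :
    (∀ v ∈ L19, v.Sublist [0, 1, 2, 0, 1, 2, 0, 1, 2]) ∧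
    ([0, 1, 2, 0, 1, 2, 0, 1, 2] : List (Fin 3)).length = 9 ∧
    (∀ S : List (Fin 3), (∀ v ∈ L19, v.Sublist S) → 9 ≤ S.length) ∧
    (∀ S : List (Fin 3), (∀ v ∈ L19, v.Sublist S) → S.length = 9 →
      S.filter (fun c => c ≠ 2) ≠ [0, 1, 0, 1, 0]) := by
  refine ⟨fun v hv => ?_, rfl, fun S hS => ?_, fun S hS hlen => ?_⟩
  · have hsub : ∀ v ∈ wordsL19, v.Sublist [0, 1, 2, 0, 1, 2, 0, 1, 2] := by decide
    exact hsub v (mem_L19_iff.1 hv)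
  · by_contra! hlt
    have hmem := mem_commonSupersequences (S ++ List.replicate (8 - S.length) 0) wordsL19
      fun w hw => (hS w (mem_L19_iff.2 hw)).trans (List.sublist_append_left _ _)
    have hlen : (S ++ List.replicate (8 - S.length) (0 : Fin 3)).length = 8 := by
      rw [List.length_append, List.length_replicate]
      omega
    rw [hlen, commonSupersequences_wordsL19_eight] at hmem
    exact List.not_mem_nil hmem
  · have hmem := mem_commonSupersequences S wordsL19 fun w hw => hS w (mem_L19_iff.2 hw)
    rw [hlen] at hmem
    exact filter_ne_of_mem_commonSupersequences_nine S hmem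
end
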